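/- A countable hypergraph E has a minimal cover if there exist positive integers n and m such that every n-element subfamily F ⊆ E satisfies |⋂F| < m. -/

import Mathlib

/-- `C` is a cover of the hypergraph `E`. -/
def IsCover {α : Type*} (E C : Set (Set α)) : Prop :=
  C ⊆ E ∧ ⋃₀ C = ⋃₀ E

/-- `C` is a minimal cover of the hypergraph `E`. -/
def IsMinimalCover {α : Type*} (E C : Set (Set α)) : Prop :=
  IsCover E C ∧ ∀ D ⊆ C, IsCover E D → D = C

/-- `S` is a subhypergraph of `E`. -/
def IsSubhypergraph {α : Type*} (E S : Set (Set α)) : Prop :=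
  ∃ F ⊆ E, ∃ A ⊆ ⋃₀ F, S = (fun T => T ∩ A) '' F

/-- `S` has a maximal edge. -/
def HasMaximalEdge {α : Type*} (S : Set (Set α)) : Prop :=
  ∃ M ∈ S, ∀ T ∈ S, M ⊆ T → T = M

/-- `S` is isomorphic to the hypergraph ω, whose vertex set is ℕ and whose
edges are the initial segments `{0, …, n-1}` for `n : ℕ`. -/
def IsoToOmega {α : Type*} (S : Set (Set α)) : Prop :=
  ∃ f : ℕ → α, Function.Injective f ∧ Set.range f = ⋃₀ S ∧
    S = {T | ∃ n : ℕ, T = f '' Set.Iio n}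

/-!
Call a hypergraph `ω`-free if no subhypergraph of it is isomorphic to `ω`. In a copy of `ω` the
first `m` vertices lie on infinitely many common edges, so the bound on intersections forces
`ω`-freeness.

In an `ω`-free hypergraph the sets of edges through a vertex satisfy the descending chain
condition. Hence for each uncovered vertex `v` there is an uncovered vertex `p` whose set of edges
is contained in that of `v` and is minimal among uncovered vertices. Any edge `e` through `p` also
covers `v`, and by minimality every vertex still uncovered lies on an edge avoiding `p`. So one may
add `e` to the cover and from then on use only edges avoiding `p`, which witnesses that `e` cannot
be dropped. As there are only countably many vertices, the Rasiowa–Sikorski lemma yields a directed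
system of such partial covers in which every vertex is eventually covered.
-/

open Set

section

variable {α : Type*} {E : Set (Set α)}

/-- The star of the vertex `x` in the hypergraph `E`: the edges containing `x`. Vertices are
compared through their stars. -/
def edgesThrough (E : Set (Set α)) (x : α) : Set (Set α) :=
  {e ∈ E | x ∈ e}

/-- A hypergraph is `ω`-free if none of its subhypergraphs is isomorphic to `ω`. -/
def OmegaFree (E : Set (Set α)) : Prop :=
  ∀ S, IsSubhypergraph E S → ¬ IsoToOmega S

theorem omegaFree_of_forall_infinite_encard_sInter_lt {m : ℕ}
    (h : ∀ F ⊆ E, F.Infinite → (⋂₀ F).encard < m) : OmegaFree E := by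
  rintro S ⟨F, hFE, A, -, rfl⟩ ⟨x, hx, -, hS⟩
  have exists_trace : ∀ n, ∃ e ∈ F, e ∩ A = x '' Iio n := fun n =>
    hS.symm.subset ⟨n, rfl⟩
  choose e heF he using exists_trace
  have e_injective : e.Injective := fun i j hij =>
    Iio_injective (hx.image_injective (by rw [← he i, ← he j, hij]))
  have image_subset : x '' Iio m ⊆ ⋂₀ (e '' Ici m) := by
    rintro _ ⟨i, hi, rfl⟩ _ ⟨j, hj, rfl⟩
    exact ((he j).superset ⟨i, Iio_subset_Iio hj hi, rfl⟩).1
  have encard_lt := h (e '' Ici m) (image_subset_iff.2 fun j _ => hFE (heF j))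
    ((Ici_infinite m).image e_injective.injOn)
  have encard_image : (x '' Iio m).encard = m := by
    rw [hx.encard_image, ← Finset.coe_Iio, encard_coe_eq_coe_finsetCard, Nat.card_Iio]
  exact encard_lt.not_ge (encard_image ▸ encard_le_encard image_subset)

namespace OmegaFree

theorem mono {F : Set (Set α)} (hE : OmegaFree E) (hFE : F ⊆ E) : OmegaFree F := by
  rintro S ⟨G, hGF, hS⟩
  exact hE S ⟨G, hGF.trans hFE, hS⟩

theorem not_forall_mem_iff_lt (hE : OmegaFree E) (x : ℕ → α) {e : ℕ → Set α}
    (he : ∀ j, e j ∈ E) : ¬ ∀ i j, x i ∈ e j ↔ i < j := by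
  intro hxe
  have trace_eq : ∀ j, e j ∩ range x = x '' Iio j := fun j => by
    rw [← image_preimage_eq_inter_range]
    exact congrArg (x '' ·) (ext fun i => hxe i j)
  have x_injective : x.Injective := fun i j hij =>
    eq_of_forall_gt_iff fun k => by rw [← hxe i k, hij, hxe j k]
  have range_subset : range x ⊆ ⋃₀ range e :=
    range_subset_iff.2 fun i => ⟨e (i + 1), mem_range_self _, (hxe i _).2 i.lt_succ_self⟩
  refine hE _ ⟨range e, range_subset_iff.2 he, range x, range_subset, rfl⟩
    ⟨x, x_injective, ?_, ?_⟩
  · rw [sUnion_image, ← iUnion₂_inter, ← sUnion_eq_biUnion, inter_eq_right.2 range_subset]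
  · ext T
    simp [trace_eq, eq_comm (a := T)]

theorem isWF_range_edgesThrough (hE : OmegaFree E) : (range (edgesThrough E)).IsWF := by
  refine isWF_iff_no_descending_seq.2 fun s hs hrange => ?_
  choose x hx using hrange
  have exists_separating : ∀ i, ∃ e ∈ s i, e ∉ s (i + 1) := fun i =>
    exists_of_ssubset (hs i.lt_succ_self)
  choose e hes he_notMem using exists_separating
  have heE : ∀ j, e j ∈ E := fun j => ((hx j).superset (hes j)).1
  have mem_iff : ∀ i j, x i ∈ e j ↔ e j ∈ s i := fun i j => by
    rw [← hx i]
    exact (and_iff_right (heE j)).symm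
  refine hE.not_forall_mem_iff_lt (fun i => x (i + 1)) heE fun i j => ?_
  rw [mem_iff]
  refine ⟨fun hmem => ?_, fun hij => hs.antitone hij (hes j)⟩
  by_contra! hji
  exact he_notMem j (hs.antitone (Nat.succ_le_succ hji) hmem)

theorem exists_minimalFor_edgesThrough (hE : OmegaFree E) {A : Set α} {v : α} (hv : v ∈ A) :
    ∃ p, MinimalFor (· ∈ A) (edgesThrough E) p ∧ edgesThrough E p ⊆ edgesThrough E v := by
  let B := {p ∈ A | edgesThrough E p ⊆ edgesThrough E v}
  have hWF : (edgesThrough E '' B).IsWF :=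
    hE.isWF_range_edgesThrough.mono (image_subset_range _ _)
  have hne : (edgesThrough E '' B).Nonempty := ⟨_, v, ⟨hv, subset_rfl⟩, rfl⟩
  obtain ⟨p, ⟨hpA, hpv⟩, hp⟩ := hWF.min_mem hne
  refine ⟨p, ⟨hpA, fun q hqA hqp => ?_⟩, hpv⟩
  by_contra hpq
  exact hWF.not_lt_min hne ⟨q, ⟨hqA, hqp.trans hpv⟩, rfl⟩ (hp ▸ ⟨hqp, hpq⟩)

theorem exists_edge_diff_subset_sUnion_notMem (hE : OmegaFree E) {A : Set α} (hA : A ⊆ ⋃₀ E)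
    {v : α} (hv : v ∈ A) :
    ∃ e ∈ E, v ∈ e ∧ ∃ p ∈ A ∩ e, A \ e ⊆ ⋃₀ {f ∈ E | p ∉ f} := by
  obtain ⟨p, ⟨hpA, hmin⟩, hpv⟩ := hE.exists_minimalFor_edgesThrough hv
  obtain ⟨e, he, hpe⟩ := hA hpA
  refine ⟨e, he, (hpv ⟨he, hpe⟩).2, p, ⟨hpA, hpe⟩, ?_⟩
  rintro w ⟨hwA, hwe⟩
  by_contra hw
  have star_subset : edgesThrough E w ⊆ edgesThrough E p := fun f hf =>
    ⟨hf.1, by_contra fun hpf => hw ⟨f, ⟨hf.1, hpf⟩, hf.2⟩⟩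
  exact hwe (hmin hwA star_subset ⟨he, hpe⟩).2

end OmegaFree

/-- An approximation to a minimal cover of `E`: a set `edges` of edges already chosen, and a set
`witnesses` of vertices which are promised to lie on at most one edge of the final cover. The last
field says that the remaining vertices can still be covered without breaking a promise. -/
structure PartialCover (E : Set (Set α)) where
  edges : Set (Set α)
  witnesses : Set α
  edges_subset : edges ⊆ E
  exists_witness : ∀ e ∈ edges, ∃ p ∈ witnesses, p ∈ e
  edge_unique : ∀ p ∈ witnesses, (edgesThrough edges p).Subsingleton
  diff_subset_sUnion_disjoint : ⋃₀ E \ ⋃₀ edges ⊆ ⋃₀ {f ∈ E | Disjoint f witnesses}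

namespace PartialCover

instance : Preorder (PartialCover E) :=
  Preorder.lift fun s => (s.edges, s.witnesses)

instance : Inhabited (PartialCover E) where
  default :=
    { edges := ∅
      witnesses := ∅
      edges_subset := empty_subset E
      exists_witness := by simp
      edge_unique := by simp
      diff_subset_sUnion_disjoint := by simp }

/-- The partial cover obtained from `s` by choosing the edge `e` with the vertex `p` as its
witness. -/
def insertEdge (s : PartialCover E) {e : Set α} {p : α} (heE : e ∈ E)
    (hes : Disjoint e s.witnesses) (hpe : p ∈ e) (hps : p ∉ ⋃₀ s.edges)
    (hcov : (⋃₀ E \ ⋃₀ s.edges) \ e ⊆ ⋃₀ {f ∈ {f ∈ E | Disjoint f s.witnesses} | p ∉ f}) :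
    PartialCover E where
  edges := insert e s.edges
  witnesses := insert p s.witnesses
  edges_subset := insert_subset heE s.edges_subset
  exists_witness := by
    rintro f (rfl | hf)
    · exact ⟨p, mem_insert _ _, hpe⟩
    · obtain ⟨q, hq, hqf⟩ := s.exists_witness f hf
      exact ⟨q, mem_insert_of_mem _ hq, hqf⟩
  edge_unique := by
    rintro q (rfl | hq)
    · refine (subsingleton_singleton (a := e)).anti fun f ⟨hf, hqf⟩ => ?_
      exact hf.resolve_right fun hfs => hps ⟨f, hfs, hqf⟩
    · refine (s.edge_unique q hq).anti fun f ⟨hf, hqf⟩ => ⟨hf.resolve_left ?_, hqf⟩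
      rintro rfl
      exact hes.notMem_of_mem_left hqf hq
  diff_subset_sUnion_disjoint := by
    rintro w ⟨hwE, hw⟩
    rw [sUnion_insert, mem_union, not_or] at hw
    obtain ⟨f, ⟨⟨hfE, hfs⟩, hpf⟩, hwf⟩ := hcov ⟨⟨hwE, hw.2⟩, hw.1⟩
    exact ⟨f, ⟨hfE, disjoint_insert_right.2 ⟨hpf, hfs⟩⟩, hwf⟩

theorem exists_mem_sUnion_edges_ge (hE : OmegaFree E) (s : PartialCover E) {v : α}
    (hv : v ∈ ⋃₀ E) : ∃ t : PartialCover E, v ∈ ⋃₀ t.edges ∧ s ≤ t := by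
  by_cases hvs : v ∈ ⋃₀ s.edges
  · exact ⟨s, hvs, le_rfl⟩
  obtain ⟨e, ⟨heE, hes⟩, hve, p, ⟨⟨-, hps⟩, hpe⟩, hcov⟩ :=
    (hE.mono (sep_subset E _)).exists_edge_diff_subset_sUnion_notMem
      s.diff_subset_sUnion_disjoint ⟨hv, hvs⟩
  exact ⟨s.insertEdge heE hes hpe hps hcov, ⟨e, mem_insert _ _, hve⟩,
    subset_insert _ _, subset_insert _ _⟩

theorem isMinimalCover_biUnion_edges {I : Set (PartialCover E)} (hI : DirectedOn (· ≤ ·) I)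
    (hcov : ∀ v ∈ ⋃₀ E, ∃ s ∈ I, v ∈ ⋃₀ s.edges) :
    IsMinimalCover E (⋃ s ∈ I, s.edges) := by
  have edges_subset : ⋃ s ∈ I, s.edges ⊆ E := iUnion₂_subset fun s _ => s.edges_subset
  refine ⟨⟨edges_subset, (sUnion_subset_sUnion edges_subset).antisymm fun v hv => ?_⟩,
    fun D hD hDE => hD.antisymm fun e he => ?_⟩
  · obtain ⟨s, hs, e, he, hve⟩ := hcov v hv
    exact ⟨e, mem_biUnion hs he, hve⟩
  · obtain ⟨s, hs, hes⟩ := mem_iUnion₂.1 he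
    obtain ⟨p, hp, hpe⟩ := s.exists_witness e hes
    obtain ⟨d, hd, hpd⟩ : p ∈ ⋃₀ D := hDE.2.superset ⟨e, s.edges_subset hes, hpe⟩
    obtain ⟨t, ht, hdt⟩ := mem_iUnion₂.1 (hD hd)
    obtain ⟨u, -, hsu, htu⟩ := hI s hs t ht
    have e_eq_d : e = d := u.edge_unique p (hsu.2 hp) ⟨hsu.1 hes, hpe⟩ ⟨htu.1 hdt, hpd⟩
    exact e_eq_d ▸ hd

end PartialCover

theorem stmt_7_general (hE : OmegaFree E) (hV : (⋃₀ E).Countable) :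
    ∃ C, IsMinimalCover E C := by
  have : Countable (⋃₀ E) := hV.to_subtype
  have := Encodable.ofCountable (⋃₀ E)
  let coversVertex (v : ⋃₀ E) : Order.Cofinal (PartialCover E) :=
    ⟨{s | v.1 ∈ ⋃₀ s.edges}, fun s => s.exists_mem_sUnion_edges_ge hE v.2⟩
  let I := Order.idealOfCofinals default coversVertex
  refine ⟨_, PartialCover.isMinimalCover_biUnion_edges (I := I) I.directed fun v hv => ?_⟩
  obtain ⟨s, hvs, hsI⟩ := Order.cofinal_meets_idealOfCofinals default coversVertex ⟨v, hv⟩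
  exact ⟨s, hsI, hvs⟩

end

theorem stmt_7 {α : Type*} (E : Set (Set α))
    (hEc : E.Countable) (hVc : (⋃₀ E).Countable)
    (h : ∃ n m : ℕ, 0 < n ∧ 0 < m ∧
      ∀ F ⊆ E, F.Finite → F.ncard = n →
        (⋂₀ F).Finite ∧ (⋂₀ F).ncard < m) :
    ∃ C, IsMinimalCover E C := by
  obtain ⟨n, m, -, -, hnm⟩ := h
  refine stmt_7_general (omegaFree_of_forall_infinite_encard_sInter_lt (m := m)
    fun F hFE hF => ?_) hVc
  obtain ⟨G, hGF, hG, hGn⟩ := hF.exists_subset_ncard_eq n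
  obtain ⟨hfin, hlt⟩ := hnm G (hGF.trans hFE) hG hGn
  calc (⋂₀ F).encard ≤ (⋂₀ G).encard := encard_le_encard (sInter_subset_sInter hGF)
    _ = (⋂₀ G).ncard := hfin.cast_ncard_eq.symm
    _ < m := mod_cast hlt
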